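/- (Right-discarding lemma) If 0 ≤ j < i ≤ n and x_j + y_j ≥ x_i + y_i, then for every i' with i < i' ≤ n such that x_j + y_j ≤ x_{i'}, one also has x_i + y_i ≤ x_{i'}, and consequently y_{i'} ≤ x_{i'} − x_i < x_{i'} − x_j. -/

import Mathlib

/-- `pSum L i` is `x_i`: the sum of the first `i` elements of `L` (so `pSum L 0 = 0`). -/
def pSum (L : List ℝ) (i : ℕ) : ℝ := (L.take i).sum

/-- A valid partition of `L`: a partition of `L` into nonempty consecutive blocks
whose totals are non-decreasing from left to right. -/
def ValidPartition (L : List ℝ) (P : List (List ℝ)) : Prop :=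
  P.flatten = L ∧ (∀ B ∈ P, B ≠ []) ∧ List.Chain' (· ≤ ·) (P.map List.sum)

/-- The total of the last block of a partition (`0` for the empty partition). -/
def lastTotal (P : List (List ℝ)) : ℝ := (P.map List.sum).getLastD 0

/-- `wrapLen L` is the wrapping length `y_{|L|}`: the minimum, over all valid
partitions of `L`, of the total of the last block (with `wrapLen [] = 0`,
realized by the empty partition). -/
noncomputable def wrapLen (L : List ℝ) : ℝ :=
  sInf {t | ∃ P, ValidPartition L P ∧ lastTotal P = t}

lemma lastTotal_concat (Q : List (List ℝ)) (B : List ℝ) : lastTotal (Q ++ [B]) = B.sum := by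
  simp [lastTotal]

lemma wrap_finite (L : List ℝ) : {t | ∃ P, ValidPartition L P ∧ lastTotal P = t}.Finite := by
  apply ((Finset.range (L.length + 1)).finite_toSet.image (fun k => (L.drop k).sum)).subset
  rintro t ⟨P, ⟨h1, -, -⟩, rfl⟩
  rcases List.eq_nil_or_concat P with rfl | ⟨Q, B, rfl⟩
  · simp at h1
    subst h1
    exact ⟨0, by simp, by simp [lastTotal]⟩
  · refine ⟨Q.flatten.length, ?_, ?_⟩
    · rw [← h1]
      simp
    · rw [← h1]
      simp only [List.concat_eq_append, lastTotal_concat]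
      simp only [List.flatten_append, List.flatten_singleton, List.drop_left]

lemma wrap_nonempty (L : List ℝ) : {t | ∃ P, ValidPartition L P ∧ lastTotal P = t}.Nonempty := by
  by_cases h : L = []
  · subst h
    exact ⟨_, [], ⟨by simp, by simp, List.isChain_nil⟩, rfl⟩
  · exact ⟨_, [L], ⟨by simp, by simpa using h, List.isChain_singleton _⟩, rfl⟩

lemma wrap_append (A B : List ℝ) (hB : B ≠ []) (h : wrapLen A ≤ B.sum) :
    wrapLen (A ++ B) ≤ B.sum := by
  obtain ⟨P, ⟨h1, h2, h3⟩, h4⟩ := (wrap_nonempty A).csInf_mem (wrap_finite A)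
  refine csInf_le (wrap_finite _).bddBelow ⟨P ++ [B], ⟨by simp [h1], ?_, ?_⟩, lastTotal_concat P B⟩
  · intro C hC
    rcases List.mem_append.1 hC with hC | hC
    · exact h2 C hC
    · rw [List.mem_singleton.1 hC]
      exact hB
  · have h5 : lastTotal P ≤ B.sum := by
      rw [h4]
      exact h
    rw [List.map_append]
    refine List.IsChain.append h3 (List.isChain_singleton _) ?_
    intro x hx y hy
    have hy' : y = B.sum := by simpa using hy.symm
    have hx' : lastTotal P = x := by
      unfold lastTotal
      rw [List.getLastD_eq_getLast?, Option.mem_def.1 hx]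
      rfl
    rw [hy', ← hx']
    exact h5

lemma pSum_lt (L : List ℝ) (hL : ∀ l ∈ L, 0 < l) (j i : ℕ) (hji : j < i)
    (hin : i ≤ L.length) : pSum L j < pSum L i := by
  have e : L.take i = L.take j ++ (L.take i).drop j := by
    conv_lhs => rw [← List.take_append_drop j (L.take i)]
    rw [List.take_take, min_eq_left hji.le]
  unfold pSum
  rw [e, List.sum_append]
  have : 0 < ((L.take i).drop j).sum := by
    apply List.sum_pos
    · intro x hx
      exact hL x (List.mem_of_mem_take (List.mem_of_mem_drop hx))
    · intro h
      have := congrArg List.length h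
      simp at this
      omega
  linarith

/-- Right-discarding lemma: If `0 ≤ j < i ≤ n` and
`x_j + y_j ≥ x_i + y_i`, then for every `i'` with `i < i' ≤ n` such that
`x_j + y_j ≤ x_{i'}`, one also has `x_i + y_i ≤ x_{i'}`, and consequently
`y_{i'} ≤ x_{i'} − x_i < x_{i'} − x_j`. -/
theorem stmt_5 (L : List ℝ) (hL : ∀ l ∈ L, 0 < l) (j i : ℕ) (hji : j < i)
    (hin : i ≤ L.length)
    (hdom : pSum L i + wrapLen (L.take i) ≤ pSum L j + wrapLen (L.take j)) :
    ∀ i', i < i' → i' ≤ L.length → pSum L j + wrapLen (L.take j) ≤ pSum L i' →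
      pSum L i + wrapLen (L.take i) ≤ pSum L i' ∧
      wrapLen (L.take i') ≤ pSum L i' - pSum L i ∧
      pSum L i' - pSum L i < pSum L i' - pSum L j := by
  intro i' hi hi' h
  have hle := hdom.trans h
  refine ⟨hle, ?_, by linarith [pSum_lt L hL j i hji hin]⟩
  have e : L.take i' = L.take i ++ (L.take i').drop i := by
    conv_lhs => rw [← List.take_append_drop i (L.take i')]
    rw [List.take_take, min_eq_left hi.le]
  have es : pSum L i' - pSum L i = ((L.take i').drop i).sum := by
    unfold pSum
    conv_lhs => rw [e]
    rw [List.sum_append]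
    ring
  rw [es]
  conv_lhs => rw [e]
  apply wrap_append
  · intro h
    have := congrArg List.length h
    simp at this
    omega
  · rw [← es]
    linarith
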